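/- arXiv:1704.06919 — 2 statements merged into one kernel-verified Lean document; each statement's English description precedes it below -/
import Mathlib

section
/- Let p be an odd positive integer, q ∈ (0,1), ε > 0, and x, s ∈ ℝ with ε < |x| ≤ 1 and |x+s| ≥ ε. Then the derivative of the two-sided Taylor model satisfies |D_p(x,s)| > (q/2) · q|x|^{q−1} = (q/2)|D_p(x,0)|, and moreover sgn(D_p(x,s)) = sgn(x+s). -/
/-!
Factoring `|x| ^ (q - 1)` out of `D_p(x,s)` leaves, up to the factor `q * sgn (x + s)`, the
truncated binomial series `S(t) = ∑_{k < p} (q-1 choose k) t ^ k` of `(1 + t) ^ (q - 1)` at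
`t = μ(x,s) / |x|`. The theorem follows from the bound `S(t) ≥ q`, which holds for every real `t`
because `p - 1` is even. Write `(q-1 choose k) = (-1) ^ k * c_k`; then `c_0 = 1` and
`c_{k+1} = c_k * (k + 1 - q) / (k + 1)`, so `c` is positive and decreasing.

* For `t ≤ 0` all terms are nonnegative and the first one is `1` (`one_le_altSum_of_nonpos`).
* For `0 ≤ t ≤ 1` the terms alternate with decreasing absolute values, so `S(t)` is at least the
  partial sum `1 - (1 - q) t`, which is at least `q` (`le_altSum_of_le_one`).
* For `t ≥ 1` one has `S(t) ≥ S(1)`, pair by pair: `c_{n+1} ≥ c_n * n / (n + 1)` for odd `n`, and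
  `(n + 1) (t ^ n - 1) ≤ n (t ^ (n + 1) - 1)` (`altSum_one_le`).
-/

/-- `μ(x,s)` from the paper, for `x ≠ 0` and `x + s ≠ 0`. -/
noncomputable def mu (x s : ℝ) : ℝ :=
  if 0 < x then (if 0 < x + s then s else -(2 * x + s))
  else (if 0 < x + s then 2 * x + s else -s)

/-- `π_j(q) = ∏_{ℓ=1}^{j-1} (q - ℓ)`, with the empty product `π_1(q) = 1`. -/
noncomputable def piq (q : ℝ) (j : ℕ) : ℝ :=
  ∏ ℓ ∈ Finset.Icc 1 (j - 1), (q - (ℓ : ℝ))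

/-- Two-sided Taylor model `m_p(x,s)` of `|·|^q` of order `p` at `x` with step `s`. -/
noncomputable def mmodel (q : ℝ) (p : ℕ) (x s : ℝ) : ℝ :=
  |x| ^ q + q * ∑ j ∈ Finset.Icc 1 p,
    (piq q j / Nat.factorial j) * |x| ^ (q - (j : ℝ)) * mu x s ^ j

/-- Derivative `D_p(x,s)` of the two-sided Taylor model with respect to `s`. -/
noncomputable def Dmodel (q : ℝ) (p : ℕ) (x s : ℝ) : ℝ :=
  Real.sign (x + s) * (q * ∑ j ∈ Finset.Icc 1 p,
    (piq q j / Nat.factorial (j - 1)) * |x| ^ (q - (j : ℝ)) * mu x s ^ (j - 1))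

/-- The absolute value of the binomial coefficient `(q-1 choose k)`, for `q < 1`. -/
noncomputable def binomAbs (q : ℝ) (k : ℕ) : ℝ :=
  ∏ i ∈ Finset.range k, (((i : ℝ) + 1 - q) / ((i : ℝ) + 1))

/-- The partial sum `∑_{k < n} (q-1 choose k) t ^ k` of the binomial series of
`(1 + t) ^ (q - 1)`. -/
noncomputable def altSum (q t : ℝ) (n : ℕ) : ℝ :=
  ∑ k ∈ Finset.range n, binomAbs q k * (-t) ^ k

lemma binomAbs_succ (q : ℝ) (k : ℕ) :
    binomAbs q (k + 1) = binomAbs q k * (((k : ℝ) + 1 - q) / ((k : ℝ) + 1)) := by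
  exact Finset.prod_range_succ _ k

lemma binomAbs_pos {q : ℝ} (hq : q < 1) (k : ℕ) : 0 < binomAbs q k := by
  refine Finset.prod_pos fun i _ => ?_
  have : (0 : ℝ) ≤ i := Nat.cast_nonneg i
  exact div_pos (by linarith) (by linarith)

lemma binomAbs_succ_le {q : ℝ} (h0 : 0 < q) (hq : q < 1) (k : ℕ) :
    binomAbs q (k + 1) ≤ binomAbs q k := by
  have hk : (0 : ℝ) ≤ k := Nat.cast_nonneg k
  rw [binomAbs_succ]
  refine mul_le_of_le_one_right (binomAbs_pos hq k).le ?_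
  rw [div_le_one (by linarith)]
  linarith

lemma piq_div_factorial (q : ℝ) (k : ℕ) :
    piq q (k + 1) / Nat.factorial k = (-1) ^ k * binomAbs q k := by
  induction k with
  | zero => simp [piq, binomAbs]
  | succ k ih =>
    have hp : piq q (k + 1 + 1) = piq q (k + 1) * (q - ((k : ℝ) + 1)) := by
      simp [piq, Finset.prod_Icc_succ_top]
    have hf : (Nat.factorial k : ℝ) ≠ 0 := by exact_mod_cast Nat.factorial_ne_zero k
    have hk : (k : ℝ) + 1 ≠ 0 := by positivity
    rw [div_eq_iff hf] at ih
    rw [hp, ih, binomAbs_succ, Nat.factorial_succ]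
    push_cast
    field_simp
    ring

lemma altSum_add_two (q t : ℝ) (n : ℕ) :
    altSum q t (n + 2) = altSum q t n + binomAbs q n * (-t) ^ n
      + binomAbs q (n + 1) * (-t) ^ (n + 1) := by
  simp [altSum, Finset.sum_range_succ]

lemma one_le_altSum_of_nonpos {q t : ℝ} (hq : q < 1) (ht : t ≤ 0) (n : ℕ) :
    1 ≤ altSum q t (n + 1) := by
  unfold altSum
  rw [Finset.sum_range_succ']
  have : 0 ≤ ∑ k ∈ Finset.range n, binomAbs q (k + 1) * (-t) ^ (k + 1) :=
    Finset.sum_nonneg fun k _ =>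
      mul_nonneg (binomAbs_pos hq _).le (pow_nonneg (by linarith) _)
  have h0 : binomAbs q 0 * (-t) ^ 0 = 1 := by simp [binomAbs]
  linarith

/-- The sums with an even number of terms increase with the number of terms, starting from
`1 - (1 - q) t`. -/
lemma le_altSum_even {q t : ℝ} (h0 : 0 < q) (hq : q < 1) (ht : 0 ≤ t) (ht1 : t ≤ 1) (m : ℕ) :
    q ≤ altSum q t (2 * m + 2) := by
  induction m with
  | zero =>
    simp [altSum, Finset.sum_range_succ, binomAbs]
    nlinarith
  | succ m ih =>
    rw [show 2 * (m + 1) + 2 = (2 * m + 2) + 2 by ring, altSum_add_two]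
    have e1 : (-t) ^ (2 * m + 2) = t ^ (2 * m + 2) := Even.neg_pow ⟨m + 1, by ring⟩ t
    have e2 : (-t) ^ (2 * m + 2 + 1) = -t ^ (2 * m + 2 + 1) := Odd.neg_pow ⟨m + 1, by ring⟩ t
    have h : binomAbs q (2 * m + 2 + 1) * t ^ (2 * m + 2 + 1)
        ≤ binomAbs q (2 * m + 2) * t ^ (2 * m + 2) :=
      mul_le_mul (binomAbs_succ_le h0 hq _) (pow_le_pow_of_le_one ht ht1 (Nat.le_succ _))
        (pow_nonneg ht _) (binomAbs_pos hq _).le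
    rw [e1, e2]
    linarith

lemma le_altSum_of_le_one {q t : ℝ} (h0 : 0 < q) (hq : q < 1) (ht : 0 ≤ t) (ht1 : t ≤ 1)
    (m : ℕ) : q ≤ altSum q t (2 * m + 1) := by
  have h := le_altSum_even h0 hq ht ht1 m
  have hs : altSum q t (2 * m + 2)
      = altSum q t (2 * m + 1) + binomAbs q (2 * m + 1) * (-t) ^ (2 * m + 1) := by
    simp [altSum, Finset.sum_range_succ]
  have e : (-t) ^ (2 * m + 1) = -t ^ (2 * m + 1) := Odd.neg_pow ⟨m, rfl⟩ t
  have := mul_nonneg (binomAbs_pos hq (2 * m + 1)).le (pow_nonneg ht (2 * m + 1))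
  rw [hs, e] at h
  linarith

lemma succ_mul_pow_sub_one_le {t : ℝ} (ht : 1 ≤ t) (n : ℕ) :
    ((n : ℝ) + 1) * (t ^ n - 1) ≤ n * (t ^ (n + 1) - 1) := by
  induction n with
  | zero => simp
  | succ n ih =>
    have h1 : 0 ≤ (t ^ (n + 1) - 1) * (t - 1) :=
      mul_nonneg (by linarith [one_le_pow₀ ht (n := n + 1)]) (by linarith)
    have h2 := mul_le_mul_of_nonneg_left ih (show (0 : ℝ) ≤ t by linarith)
    push_cast
    -- With `f n` the right side minus the left side of the claim,
    -- `f (n + 1) = t * f n + (t ^ (n + 1) - 1) * (t - 1)`.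
    linear_combination h1 + h2

lemma altSum_one_le {q t : ℝ} (hq : q < 1) (ht : 1 ≤ t) (m : ℕ) :
    altSum q 1 (2 * m + 1) ≤ altSum q t (2 * m + 1) := by
  induction m with
  | zero => simp [altSum]
  | succ m ih =>
    rw [show 2 * (m + 1) + 1 = (2 * m + 1) + 2 by ring, altSum_add_two, altSum_add_two]
    set n := 2 * m + 1 with hn
    have ho : Odd n := ⟨m, rfl⟩
    have he : Even (n + 1) := ho.add_one
    rw [ho.neg_pow, ho.neg_pow, he.neg_pow, he.neg_pow, one_pow, one_pow, binomAbs_succ q n]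
    have hk : (0 : ℝ) < (n : ℝ) + 1 := by positivity
    have hc := binomAbs_pos hq n
    have hT : 0 ≤ t ^ (n + 1) - 1 := by linarith [one_le_pow₀ ht (n := n + 1)]
    have key : t ^ n - 1 ≤ ((n : ℝ) + 1 - q) / ((n : ℝ) + 1) * (t ^ (n + 1) - 1) := by
      rw [div_mul_eq_mul_div, le_div_iff₀ hk]
      nlinarith [succ_mul_pow_sub_one_le ht n, mul_nonneg (sub_nonneg.2 hq.le) hT]
    have := mul_le_mul_of_nonneg_left key hc.le
    linear_combination ih + this

lemma le_altSum {q : ℝ} (h0 : 0 < q) (hq : q < 1) (t : ℝ) (m : ℕ) :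
    q ≤ altSum q t (2 * m + 1) := by
  rcases le_total t 0 with ht | ht
  · exact hq.le.trans (one_le_altSum_of_nonpos hq ht _)
  rcases le_total t 1 with ht1 | ht1
  · exact le_altSum_of_le_one h0 hq ht ht1 m
  · exact (le_altSum_of_le_one h0 hq zero_le_one le_rfl m).trans (altSum_one_le hq ht1 m)

lemma Dmodel_eq (q : ℝ) (p : ℕ) {x : ℝ} (s : ℝ) (hx : 0 < |x|) :
    Dmodel q p x s
      = Real.sign (x + s) * (q * |x| ^ (q - 1) * altSum q (mu x s / |x|) p) := by
  have hsum : ∑ j ∈ Finset.Icc 1 p,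
      (piq q j / Nat.factorial (j - 1)) * |x| ^ (q - (j : ℝ)) * mu x s ^ (j - 1)
      = |x| ^ (q - 1) * altSum q (mu x s / |x|) p := by
    rw [← Finset.Ico_add_one_right_eq_Icc, Finset.sum_Ico_eq_sum_range, altSum, Finset.mul_sum]
    refine Finset.sum_congr (by simp) fun k _ => ?_
    have hr : |x| ^ (q - ((k + 1 : ℕ) : ℝ)) = |x| ^ (q - 1) / |x| ^ k := by
      rw [← Real.rpow_natCast, ← Real.rpow_sub hx]
      congr 1
      push_cast
      ring
    rw [add_comm 1 k, Nat.add_sub_cancel, piq_div_factorial, hr, neg_pow (mu x s / |x|), div_pow]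
    ring
  rw [Dmodel, hsum]
  ring

theorem stmt_7 (p : ℕ) (hp : Odd p) (hp0 : 0 < p) (q : ℝ) (hq : q ∈ Set.Ioo (0:ℝ) 1)
    (ε : ℝ) (hε : 0 < ε) (x s : ℝ) (hxl : ε < |x|) (hxu : |x| ≤ 1)
    (hxs : ε ≤ |x + s|) :
    (q / 2) * (q * |x| ^ (q - 1)) < |Dmodel q p x s| ∧
    Real.sign (Dmodel q p x s) = Real.sign (x + s) := by
  obtain ⟨h0, h1⟩ := hq
  obtain ⟨m, rfl⟩ := hp
  have hx : 0 < |x| := hε.trans hxl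
  have hne : x + s ≠ 0 := abs_pos.1 (hε.trans_le hxs)
  have hA : 0 < q * |x| ^ (q - 1) := mul_pos h0 (Real.rpow_pos_of_pos hx _)
  have hS := le_altSum h0 h1 (mu x s / |x|) m
  rw [Dmodel_eq q _ s hx]
  set S := altSum q (mu x s / |x|) (2 * m + 1)
  set A := q * |x| ^ (q - 1)
  have hP : 0 < A * S := mul_pos hA (by linarith)
  have hlt : q / 2 * A < A * S := by nlinarith
  rcases lt_or_gt_of_ne hne with h | h
  · rw [Real.sign_of_neg h, neg_one_mul, abs_neg, abs_of_pos hP]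
    exact ⟨hlt, Real.sign_of_neg (by linarith)⟩
  · rw [Real.sign_of_pos h, one_mul, abs_of_pos hP]
    exact ⟨hlt, Real.sign_of_pos hP⟩
end

section
/- Let q ∈ (0,1), let p ≥ 1 be an integer, let ε > 0, and let x, s ∈ ℝ with |x| ≥ ε and |x+s| ≥ ε. Then | q|x+s|^{q−1} sgn(x+s) − D_p(x,s) | ≤ q (min(|x|, |x+s|))^{q−p−1} |μ(x,s)|^p ≤ q ε^{q−p−1} |s|^p, where q|x+s|^{q−1}sgn(x+s) is the derivative of t ↦ |t|^q at t = x+s. -/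
lemma mu_eq_abs_sub_abs {x s : ℝ} (hx : x ≠ 0) (hxs : x + s ≠ 0) : mu x s = |x + s| - |x| := by
  unfold mu
  rcases lt_or_gt_of_ne hx with h | h <;> rcases lt_or_gt_of_ne hxs with h' | h'
  · rw [if_neg h.not_gt, if_neg h'.not_gt, abs_of_neg h, abs_of_neg h']; ring
  · rw [if_neg h.not_gt, if_pos h', abs_of_neg h, abs_of_pos h']; ring
  · rw [if_pos h, if_neg h'.not_gt, abs_of_pos h, abs_of_neg h']; ring
  · rw [if_pos h, if_pos h', abs_of_pos h, abs_of_pos h']; ring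

lemma piq_succ_succ (q : ℝ) (n : ℕ) : piq q (n + 2) = piq q (n + 1) * (q - (n + 1)) := by
  simp [piq, Finset.prod_Icc_succ_top]

lemma abs_piq_le {q : ℝ} (h0 : 0 ≤ q) (h1 : q ≤ 1) (n : ℕ) :
    |piq q (n + 1)| ≤ (n.factorial : ℝ) := by
  induction n with
  | zero => simp [piq]
  | succ n ih =>
    have h : |q - ((n : ℝ) + 1)| ≤ (n : ℝ) + 1 := by
      have : (0 : ℝ) ≤ n := n.cast_nonneg
      rw [abs_le]; constructor <;> linarith
    rw [piq_succ_succ, abs_mul, Nat.factorial_succ, mul_comm (n + 1)]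
    push_cast
    gcongr

lemma iteratedDeriv_rpow_sub_one (q t : ℝ) (k : ℕ) :
    iteratedDeriv k (fun t : ℝ => t ^ (q - 1)) t = piq q (k + 1) * t ^ (q - (k + 1)) := by
  have hp : (descPochhammer ℝ k).eval (q - 1) = piq q (k + 1) := by
    induction k with
    | zero => simp [piq]
    | succ k ih =>
      rw [descPochhammer_succ_right, piq_succ_succ, ← ih]
      simp only [Polynomial.eval_mul, Polynomial.eval_sub, Polynomial.eval_X,
        Polynomial.eval_natCast]
      ring
  rw [iteratedDeriv_eq_iterate, Real.iter_deriv_rpow_const, hp]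
  congr 2
  ring

/-- The sum in `Dmodel`, with `μ` written as `b - a`, is a Taylor polynomial of `t ↦ t^(q-1)`: its
`j`-th term is the Taylor term of degree `j - 1`. -/
lemma taylorWithinEval_rpow {a b : ℝ} (ha : 0 < a) (hab : a ≠ b) (q : ℝ) (n : ℕ) :
    taylorWithinEval (fun t : ℝ => t ^ (q - 1)) n (Set.uIcc a b) a b =
      ∑ j ∈ Finset.Icc 1 (n + 1),
        piq q j / Nat.factorial (j - 1) * a ^ (q - (j : ℝ)) * (b - a) ^ (j - 1) := by
  rw [taylor_within_apply, ← Finset.Ico_add_one_right_eq_Icc, Finset.sum_Ico_eq_sum_range]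
  refine Finset.sum_congr (by simp) fun k _ => ?_
  rw [iteratedDerivWithin_eq_iteratedDeriv (uniqueDiffOn_uIcc hab)
    (Real.contDiffAt_rpow_const_of_ne ha.ne') Set.left_mem_uIcc, iteratedDeriv_rpow_sub_one,
    Nat.add_sub_cancel_left, Nat.add_comm 1 k]
  push_cast
  rw [smul_eq_mul]
  ring

/-- The Taylor estimate on the positive half-line, of order `p = n + 1`; no order between `a` and `b`
is assumed. -/
lemma abs_taylor_remainder_rpow_le {a b q : ℝ} (ha : 0 < a) (hb : 0 < b) (h0 : 0 ≤ q)
    (h1 : q ≤ 1) (n : ℕ) :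
    |b ^ (q - 1) - ∑ j ∈ Finset.Icc 1 (n + 1),
        piq q j / Nat.factorial (j - 1) * a ^ (q - (j : ℝ)) * (b - a) ^ (j - 1)| ≤
      (min a b) ^ (q - ((n : ℝ) + 2)) * |b - a| ^ (n + 1) := by
  rcases eq_or_ne a b with rfl | hab
  · -- Only the term `j = 1` survives when `b = a`, because `0 ^ 0 = 1`.
    rw [Finset.sum_eq_single_of_mem 1 (by simp)]
    · simp [piq]
    · intro j hj hj1
      have : j - 1 ≠ 0 := by have := (Finset.mem_Icc.mp hj).1; omega
      simp [this]
  have hm : 0 < min a b := lt_min ha hb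
  obtain ⟨ξ, hξ, h⟩ := taylor_mean_remainder_lagrange_iteratedDeriv (n := n) hab
    (f := fun t : ℝ => t ^ (q - 1)) (fun t ht =>
      (Real.contDiffAt_rpow_const_of_ne (hm.trans_le ht.1).ne').contDiffWithinAt)
  rw [taylorWithinEval_rpow ha hab, iteratedDeriv_rpow_sub_one] at h
  have hmξ : min a b ≤ ξ := hξ.1.le
  have hξ0 : 0 < ξ := hm.trans_le hmξ
  have hn : (0 : ℝ) ≤ n := n.cast_nonneg
  have hpow : ξ ^ (q - ((n : ℝ) + 2)) ≤ (min a b) ^ (q - ((n : ℝ) + 2)) :=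
    Real.rpow_le_rpow_of_nonpos hm hmξ (by linarith)
  have hc : |piq q (n + 2)| / ((n + 1).factorial : ℝ) ≤ 1 :=
    div_le_one_of_le₀ (abs_piq_le h0 h1 (n + 1)) (by positivity)
  have he : q - (((n + 1 : ℕ) : ℝ) + 1) = q - ((n : ℝ) + 2) := by push_cast; ring
  rw [h, he, abs_div, abs_mul, abs_mul, abs_pow, Nat.abs_cast,
    abs_of_pos (Real.rpow_pos_of_pos hξ0 _)]
  calc |piq q (n + 2)| * ξ ^ (q - ((n : ℝ) + 2)) * |b - a| ^ (n + 1) / ((n + 1).factorial : ℝ)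
      = |piq q (n + 2)| / ((n + 1).factorial : ℝ) *
          (ξ ^ (q - ((n : ℝ) + 2)) * |b - a| ^ (n + 1)) := by ring
    _ ≤ 1 * (ξ ^ (q - ((n : ℝ) + 2)) * |b - a| ^ (n + 1)) := by gcongr
    _ ≤ (min a b) ^ (q - ((n : ℝ) + 2)) * |b - a| ^ (n + 1) := by rw [one_mul]; gcongr

theorem stmt_10 (q : ℝ) (hq : q ∈ Set.Ioo (0:ℝ) 1) (p : ℕ) (hp : 1 ≤ p)
    (ε : ℝ) (hε : 0 < ε) (x s : ℝ) (hx : ε ≤ |x|) (hxs : ε ≤ |x + s|) :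
    |q * |x + s| ^ (q - 1) * Real.sign (x + s) - Dmodel q p x s| ≤
      q * (min |x| |x + s|) ^ (q - ((p : ℝ) + 1)) * |mu x s| ^ p ∧
    q * (min |x| |x + s|) ^ (q - ((p : ℝ) + 1)) * |mu x s| ^ p ≤
      q * ε ^ (q - ((p : ℝ) + 1)) * |s| ^ p := by
  obtain ⟨h0, h1⟩ := hq
  have ha : 0 < |x| := hε.trans_le hx
  have hb : 0 < |x + s| := hε.trans_le hxs
  have hmu : mu x s = |x + s| - |x| := mu_eq_abs_sub_abs (abs_pos.mp ha) (abs_pos.mp hb)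
  constructor
  · obtain ⟨n, rfl⟩ := Nat.exists_eq_add_of_le' hp
    have hsign : |Real.sign (x + s)| = 1 := by
      rcases Real.sign_apply_eq_of_ne_zero _ (abs_pos.mp hb) with h | h <;> simp [h]
    have key := abs_taylor_remainder_rpow_le ha hb h0.le h1.le n
    have he : q - (((n + 1 : ℕ) : ℝ) + 1) = q - ((n : ℝ) + 2) := by push_cast; ring
    rw [Dmodel, hmu, he, mul_comm _ (Real.sign (x + s)), ← mul_sub, ← mul_sub, abs_mul, abs_mul,
      hsign, one_mul, abs_of_pos h0, mul_assoc]
    gcongr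
  · have hs : |mu x s| ≤ |s| := by
      rw [hmu]
      simpa using abs_abs_sub_abs_le_abs_sub (x + s) x
    have hpow : (min |x| |x + s|) ^ (q - ((p : ℝ) + 1)) ≤ ε ^ (q - ((p : ℝ) + 1)) :=
      Real.rpow_le_rpow_of_nonpos hε (le_min hx hxs) (by
        have : (0 : ℝ) ≤ p := p.cast_nonneg
        linarith)
    gcongr
end
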